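/- Let M be a finite maximal code with a^n ∈ M, and set B := A ∖ {a}. Then 𝒞_M := { C_M(ω) : ω ∈ A* } and 𝒞'_M := { C_M(ω) : ω ∈ B(a*B)* } are stable sets of n-cbc (in particular each C_M(ω) is an n-cbc). -/

import Mathlib

/-!
Write `M*` for the submonoid generated by `M`. The following facts about `M*` carry the proof.

* `M*` is stable: `u, v, u w, w v ∈ M*` imply `w ∈ M*` (`stable_closure`), and `a^d ∈ M*` forces
  `n ∣ d` (`dvd_of_apow_mem`), because `M` is a code.
* As `M` is finite, its words have bounded length, so every long block of `a`'s inside a word of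
  `M*` contains a cut of the factorization (`cut_apow`).
* As `M` is maximal, it is complete, i.e. every word is a factor of a word of `M*` (`complete`):
  if `w` is not a factor, neither is some unbordered `y = w d^|w|`, and `M ∪ {y}` is still a code.

Exponents of bayonets matter modulo `n` only, since `a^n ∈ M` allows padding. The cut property
gives `C_M(ω) ∘_r C_M(ω') = C_M(ω a^R ω')` for a large `R ≡ r` mod `n` (`comp_eq`), so both
families are closed under composition. Stability of `M*` shows that a bayonet of a composition
arises from exactly one pair (`unamb`), and that `{a^n} ∪ C_M(ω)` is a code (`code_Cword`).

For the cardinality (`card_expo`), unambiguity yields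
`|C_M(ω)| |C_M(ω')| = ∑_{r < n} |C_M(ω) ∘_r C_M(ω')|` (`card_mul`). With `K` and `m` the largest
and the smallest cardinality of a set `C_M(ω)`, the case of an extremal `ω = ω'` gives
`K² ≤ n K` and `m² ≥ n m`. Completeness gives `m > 0`, hence `n ≤ m ≤ K ≤ n`.
-/

namespace CBC

variable {A : Type*}

/-- `a^i` -/
def apow (a : A) (i : ℕ) : FreeMonoid A := (FreeMonoid.of a) ^ i

/-- the bayonet word `a^i b a^j` -/
def bay (a b : A) (i j : ℕ) : FreeMonoid A := apow a i * FreeMonoid.of b * apow a j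

/-- `X` is a (variable-length) code -/
def IsCode (X : Set (FreeMonoid A)) : Prop :=
  ∀ l m : List (FreeMonoid A), (∀ w ∈ l, w ∈ X) → (∀ w ∈ m, w ∈ X) →
    l.prod = m.prod → l = m

/-- `X` is a maximal code -/
def IsMaximalCode (X : Set (FreeMonoid A)) : Prop :=
  IsCode X ∧ ∀ Y : Set (FreeMonoid A), IsCode Y → X ⊆ Y → Y = X

/-- a bayonet code : a code included in `a^* b a^*` -/
def IsBayonetCode (a b : A) (Y : Set (FreeMonoid A)) : Prop :=
  (∀ w ∈ Y, ∃ i j : ℕ, w = bay a b i j) ∧ IsCode Y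

/-- an `n`-complete bayonet code -/
def IsCbc (a b : A) (n : ℕ) (X : Set (FreeMonoid A)) : Prop :=
  (∀ w ∈ X, ∃ i < n, ∃ j < n, w = bay a b i j) ∧ X.ncard = n ∧
    IsCode (insert (apow a n) X)

/-- the composition `X ∘_r Y` -/
def comp (a b : A) (n r : ℕ) (X Y : Set (FreeMonoid A)) : Set (FreeMonoid A) :=
  { w | ∃ i j k l : ℕ, bay a b i j ∈ X ∧ bay a b k l ∈ Y ∧ (j + k) % n = r ∧
        w = bay a b i l }

/-- iterated composition `X ∘_{r₁} X₁ ∘_{r₂} ⋯ ∘_{r_k} X_k` -/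
def compList (a b : A) (n : ℕ) (X : Set (FreeMonoid A))
    (rest : List (ℕ × Set (FreeMonoid A))) : Set (FreeMonoid A) :=
  rest.foldl (fun acc p => comp a b n p.1 acc p.2) X

/-- a compatible set of `n`-cbc -/
def Compatible (a b : A) (n : ℕ) (E : Set (Set (FreeMonoid A))) : Prop :=
  ∀ X ∈ E, ∀ rest : List (ℕ × Set (FreeMonoid A)),
    (∀ p ∈ rest, p.1 < n ∧ p.2 ∈ E) → IsCbc a b n (compList a b n X rest)

/-- a stable set of `n`-cbc -/
def StableSet (a b : A) (n : ℕ) (S : Set (Set (FreeMonoid A))) : Prop :=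
  (∀ X ∈ S, IsCbc a b n X) ∧ ∀ X ∈ S, ∀ Y ∈ S, ∀ r < n, comp a b n r X Y ∈ S

/-- `E^∘`, the smallest stable set containing `E` -/
def stableClosure (a b : A) (n : ℕ) (E : Set (Set (FreeMonoid A))) :
    Set (Set (FreeMonoid A)) :=
  ⋂₀ { S | StableSet a b n S ∧ E ⊆ S }

/-- `(P,Q)` is a border of the `n`-cbc `X` : the map
`P × X × Q → (ZMod n)²`, `(p, a^i b a^j, q) ↦ (p + i, j + q)` is a bijection. -/
def IsBorder (a b : A) (n : ℕ) (P Q : Set ℤ) (X : Set (FreeMonoid A)) : Prop :=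
  ∀ c : ZMod n × ZMod n, ∃! t : ℤ × (ℕ × ℕ) × ℤ,
    t.1 ∈ P ∧ bay a b t.2.1.1 t.2.1.2 ∈ X ∧ t.2.2 ∈ Q ∧
    (t.1 : ZMod n) + (t.2.1.1 : ZMod n) = c.1 ∧
    (t.2.1.2 : ZMod n) + (t.2.2 : ZMod n) = c.2

/-- `(P,Q)` is a border of every element of `E` -/
def BordersFamily (a b : A) (n : ℕ) (P Q : Set ℤ)
    (E : Set (Set (FreeMonoid A))) : Prop :=
  ∀ X ∈ E, IsBorder a b n P Q X

def toZ (S : Set ℕ) : Set ℤ := (fun i : ℕ => (i : ℤ)) '' S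

def toZModN (n : ℕ) (S : Set ℕ) : Set (ZMod n) := (fun i : ℕ => (i : ZMod n)) '' S

def toZModZ (n : ℕ) (S : Set ℤ) : Set (ZMod n) := (fun i : ℤ => (i : ZMod n)) '' S

/-- `(P,Q)` is a factorization of size `n` -/
def IsFactorization (n : ℕ) (P Q : Set (ZMod n)) : Prop :=
  ∀ c : ZMod n, ∃! pq : ZMod n × ZMod n, pq.1 ∈ P ∧ pq.2 ∈ Q ∧ pq.1 + pq.2 = c

/-- `L_k^n(Y)` -/
def Lset (a b : A) (n : ℕ) (Y : Set (FreeMonoid A)) (k : ℕ) : Set ℕ :=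
  { i | ∃ i' j' : ℕ, bay a b i' j' ∈ Y ∧ i' % n = i ∧ j' % n = k }

/-- `R_k^n(Y)` -/
def Rset (a b : A) (n : ℕ) (Y : Set (FreeMonoid A)) (k : ℕ) : Set ℕ :=
  { j | ∃ i' j' : ℕ, bay a b i' j' ∈ Y ∧ i' % n = k ∧ j' % n = j }

/-- `L(Y)` -/
def Lfull (a b : A) (n : ℕ) (Y : Set (FreeMonoid A)) : Set ℕ :=
  { i | ∃ i' j' : ℕ, bay a b i' j' ∈ Y ∧ i' % n = i }

/-- `R(Y)` -/
def Rfam (a b : A) (n : ℕ) (Y : Set (FreeMonoid A)) : Set (Set ℕ) :=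
  { R | ∃ k ∈ Lfull a b n Y, R = Rset a b n Y k }

/-- the `n`-cbc `X` borders the set `E` -/
def CbcBorders (a b : A) (n : ℕ) (X : Set (FreeMonoid A))
    (E : Set (Set (FreeMonoid A))) : Prop :=
  ∀ R ∈ Rfam a b n X,
    IsFactorization n (toZModN n R) (toZModN n (Lfull a b n X)) ∧
    BordersFamily a b n (toZ R) (toZ (Lfull a b n X)) E

/-- `R_k^n(a^P X)` -/
def RsetShift (a b : A) (n : ℕ) (P : Set ℤ) (X : Set (FreeMonoid A)) (k : ℕ) :
    Set ℕ :=
  { j | j < n ∧ ∃ (p : ℤ) (i' j' : ℕ), p ∈ P ∧ bay a b i' j' ∈ X ∧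
        ((p + (i' : ℤ) : ℤ) : ZMod n) = (k : ZMod n) ∧ j' % n = j }

/-- `L_k^n(Y a^Q)` -/
def LsetShift (a b : A) (n : ℕ) (Y : Set (FreeMonoid A)) (Q : Set ℤ) (k : ℕ) :
    Set ℕ :=
  { i | i < n ∧ ∃ (i' j' : ℕ) (q : ℤ), q ∈ Q ∧ bay a b i' j' ∈ Y ∧
        i' % n = i ∧ (((j' : ℤ) + q : ℤ) : ZMod n) = (k : ZMod n) }

/-- `H_t(X)`, for `X ⊆ { a^i b a^j : i, j ∈ [n) }` -/
def Hfam (a b : A) (n t : ℕ) (X : Set (FreeMonoid A)) : Set (Set (FreeMonoid A)) :=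
  { Y | ∃ f : ℕ → ℕ → ℕ → ℕ, (∀ i j s, f i j s < t) ∧
      Y = { w | ∃ i j s : ℕ, bay a b i j ∈ X ∧ s < t ∧
                w = bay a b (i + f i j s * n) (j + s * n) } }

/-- `E' ∈ ℋ_t(E)` -/
def HfamSet (a b : A) (n t : ℕ) (E E' : Set (Set (FreeMonoid A))) : Prop :=
  (∀ Y ∈ E', ∃ X ∈ E, Y ∈ Hfam a b n t X) ∧
  (∀ X ∈ E, ∃ Y ∈ E', Y ∈ Hfam a b n t X)

/-- the dual `X̃` of a bayonet code -/
def dual (a b : A) (X : Set (FreeMonoid A)) : Set (FreeMonoid A) :=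
  { w | ∃ i j : ℕ, bay a b i j ∈ X ∧ w = bay a b j i }

/-- a set `E` of `n`-cbc is of Hajós -/
def IsHajos (a b : A) (n : ℕ) (E : Set (Set (FreeMonoid A))) : Prop :=
  ∃ (k : ℕ) (ts : ℕ → ℕ) (Ys : ℕ → Set (FreeMonoid A)),
    (∀ i, 1 ≤ i → i ≤ k → 1 < ts i) ∧
    (∏ i ∈ Finset.Icc 1 k, ts i) = n ∧
    Ys 0 = {FreeMonoid.of b} ∧
    (∀ i, i ≤ k - 1 → IsBayonetCode a b (Ys i)) ∧
    (∀ i, 1 ≤ i → i ≤ k - 1 →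
      dual a b (Ys i) ∈ Hfam a b (∏ j ∈ Finset.Icc 1 (i - 1), ts j) (ts i) (Ys (i - 1))) ∧
    (if k = 0 then ∀ Y ∈ E, Y = ({FreeMonoid.of b} : Set (FreeMonoid A))
     else
       (∀ Y ∈ E, Y ∈ Hfam a b (∏ j ∈ Finset.Icc 1 (k - 1), ts j) (ts k) (Ys (k - 1))) ∨
       (∀ Y ∈ E, dual a b Y ∈ Hfam a b (∏ j ∈ Finset.Icc 1 (k - 1), ts j) (ts k) (Ys (k - 1))))

/-- a Krasner factorization of size `n` -/
def IsKrasner (n : ℕ) (P Q : Set ℕ) : Prop :=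
  P.Finite ∧ Q.Finite ∧ P.ncard * Q.ncard = n ∧ ∀ k < n, ∃ p ∈ P, ∃ q ∈ Q, k = p + q

/-- `C_M(ω) = { a^{i mod n} b a^{j mod n} : a^i ω a^j ∈ M^* }` -/
def Cword (a b : A) (n : ℕ) (M : Set (FreeMonoid A)) (ω : FreeMonoid A) :
    Set (FreeMonoid A) :=
  { w | ∃ i j : ℕ, apow a i * ω * apow a j ∈ Submonoid.closure M ∧
        w = bay a b (i % n) (j % n) }

/-- `ω ∈ B (a^* B)^*` where `B = A ∖ {a}` -/
def InBStar (a : A) (ω : FreeMonoid A) : Prop :=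
  ∃ (c : A) (l : List (ℕ × A)), c ≠ a ∧ (∀ p ∈ l, p.2 ≠ a) ∧
    ω = FreeMonoid.of c * (l.map (fun p => apow a p.1 * FreeMonoid.of p.2)).prod

/-! ### Words -/

/-- Levi's lemma, in the case where the length comparison is known. -/
lemma levi {u v u' v' : FreeMonoid A} (h : u * v = u' * v') (hl : u.length ≤ u'.length) :
    ∃ d, u' = u * d ∧ v = d * v' := by
  have h' : FreeMonoid.toList u ++ FreeMonoid.toList v
      = FreeMonoid.toList u' ++ FreeMonoid.toList v' := h
  rcases List.append_eq_append_iff.1 h' with ⟨c, h1, h2⟩ | ⟨c, h1, h2⟩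
  · exact ⟨FreeMonoid.ofList c, h1, h2⟩
  · have hc : c = [] := by
      have e := congrArg List.length h1
      have hl' : (FreeMonoid.toList u).length ≤ (FreeMonoid.toList u').length := hl
      rw [List.length_append] at e
      exact List.length_eq_zero_iff.1 (by omega)
    subst hc
    refine ⟨1, ?_, ?_⟩
    · rw [mul_one]; simpa using h1.symm
    · rw [one_mul]; simpa using h2.symm

lemma apow_add (a : A) (i j : ℕ) : apow a (i + j) = apow a i * apow a j := pow_add _ _ _

lemma apow_length (a : A) (i : ℕ) : (apow a i).length = i := by
  induction i with
  | zero => rfl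
  | succ k ih => rw [apow_add, FreeMonoid.length_mul, ih]; rfl

lemma apow_mul (a : A) (i j : ℕ) : apow a (i * j) = apow a i ^ j := pow_mul _ _ _

lemma toList_apow (a : A) (i : ℕ) : FreeMonoid.toList (apow a i) = List.replicate i a := by
  induction i with
  | zero => rfl
  | succ k ih =>
    rw [apow_add, FreeMonoid.toList_mul, ih, List.replicate_succ']; rfl

/-- A prefix of a power of `a` is a power of `a`, and so is the corresponding suffix. -/
lemma apow_eq_mul {a : A} {R : ℕ} {x y : FreeMonoid A} (h : apow a R = x * y) :
    ∃ s t, s + t = R ∧ x = apow a s ∧ y = apow a t := by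
  have h' := congrArg FreeMonoid.toList h
  rw [toList_apow, FreeMonoid.toList_mul] at h'
  obtain ⟨h1, h2, h3⟩ := List.append_eq_replicate_iff.1 h'.symm
  refine ⟨_, _, h1, FreeMonoid.toList.injective ?_, FreeMonoid.toList.injective ?_⟩
  · rw [toList_apow]; exact h2
  · rw [toList_apow]; exact h3

/-- The block of `a`'s before the first `b` is determined by the word. -/
lemma apow_of_inj {a b : A} (hab : a ≠ b) {i k : ℕ} {u v : FreeMonoid A}
    (h : apow a i * (FreeMonoid.of b * u) = apow a k * (FreeMonoid.of b * v)) :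
    i = k ∧ u = v := by
  have key : ∀ (i k : ℕ) (u v : FreeMonoid A), i ≤ k →
      apow a i * (FreeMonoid.of b * u) = apow a k * (FreeMonoid.of b * v) → i = k ∧ u = v := by
    intro i k u v hik h
    obtain ⟨d, rfl⟩ := Nat.exists_eq_add_of_le hik
    rw [apow_add, mul_assoc, mul_left_cancel_iff] at h
    cases d with
    | zero => exact ⟨rfl, mul_left_cancel h⟩
    | succ d =>
      exfalso
      rw [Nat.add_comm, apow_add, mul_assoc] at h
      have h' := congrArg (fun w => (FreeMonoid.toList w).head?) h
      simp [apow] at h'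
      exact hab h'.symm
  rcases le_total i k with hik | hik
  · exact key _ _ _ _ hik h
  · obtain ⟨h1, h2⟩ := key _ _ _ _ hik h.symm
    exact ⟨h1.symm, h2.symm⟩

lemma bay_inj {a b : A} (hab : a ≠ b) {i j k l : ℕ} (h : bay a b i j = bay a b k l) :
    i = k ∧ j = l := by
  unfold bay at h
  rw [mul_assoc, mul_assoc] at h
  obtain ⟨h1, h2⟩ := apow_of_inj hab h
  refine ⟨h1, ?_⟩
  have := congrArg FreeMonoid.length h2
  rwa [apow_length, apow_length] at this

/-! ### The submonoid generated by a code -/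

/-- The submonoid generated by a code is stable in Schützenberger's sense. -/
lemma stable_closure {M : Set (FreeMonoid A)} (hM : IsCode M) {u v w : FreeMonoid A}
    (hu : u ∈ Submonoid.closure M) (hv : v ∈ Submonoid.closure M)
    (huw : u * w ∈ Submonoid.closure M) (hwv : w * v ∈ Submonoid.closure M) :
    w ∈ Submonoid.closure M := by
  obtain ⟨lu, hlu, rfl⟩ := Submonoid.exists_list_of_mem_closure hu
  obtain ⟨lv, hlv, rfl⟩ := Submonoid.exists_list_of_mem_closure hv
  obtain ⟨l1, hl1, e1⟩ := Submonoid.exists_list_of_mem_closure huw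
  obtain ⟨l2, hl2, e2⟩ := Submonoid.exists_list_of_mem_closure hwv
  have e : lu ++ l2 = l1 ++ lv := by
    apply hM
    · intro x hx
      exact (List.mem_append.1 hx).elim (hlu x) (hl2 x)
    · intro x hx
      exact (List.mem_append.1 hx).elim (hl1 x) (hlv x)
    · rw [List.prod_append, List.prod_append, e1, e2, mul_assoc]
  rcases List.append_eq_append_iff.1 e with ⟨c, h1, h2⟩ | ⟨c, h1, h2⟩
  · have hw : w = c.prod := by
      rw [h1, List.prod_append] at e1
      exact (mul_left_cancel e1).symm
    rw [hw]
    refine Submonoid.list_prod_mem _ fun x hx => Submonoid.subset_closure (hl1 x ?_)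
    rw [h1]; exact List.mem_append_right _ hx
  · have hw : w * c.prod = 1 := by
      have e3 : lu.prod * (w * c.prod) = lu.prod * 1 := by
        rw [← mul_assoc, ← e1, ← List.prod_append, ← h1, mul_one]
      exact mul_left_cancel e3
    have : w = 1 := by
      have := congrArg FreeMonoid.length hw
      rw [FreeMonoid.length_mul] at this
      apply FreeMonoid.length_eq_zero.1
      have h0 : (1 : FreeMonoid A).length = 0 := rfl
      omega
    rw [this]; exact one_mem _

/-- Comparing the two factorizations of `a^(nd)`, as a power of an `M`-factorization of `a^d` and
as a power of the word `a^n` of `M`, shows that only multiples of `n` are exponents. -/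
lemma dvd_of_apow_mem {M : Set (FreeMonoid A)} (hM : IsCode M) {a : A} {n : ℕ} (hn : 1 ≤ n)
    (han : apow a n ∈ M) {d : ℕ} (hd : apow a d ∈ Submonoid.closure M) : n ∣ d := by
  obtain ⟨l, hl, e⟩ := Submonoid.exists_list_of_mem_closure hd
  have h := hM (List.replicate n l).flatten (List.replicate d (apow a n))
    (by
      intro w hw
      obtain ⟨l', hl', hw'⟩ := List.mem_flatten.1 hw
      rw [List.eq_of_mem_replicate hl'] at hw'
      exact hl w hw')
    (by
      intro w hw
      rw [List.eq_of_mem_replicate hw]; exact han)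
    (by
      rw [List.prod_flatten, List.map_replicate, List.prod_replicate, List.prod_replicate, e,
        ← apow_mul, ← apow_mul, Nat.mul_comm])
  have hl' : ∀ w ∈ l, w = apow a n := by
    intro w hw
    have : w ∈ (List.replicate n l).flatten :=
      List.mem_flatten.2 ⟨l, List.mem_replicate.2 ⟨by omega, rfl⟩, hw⟩
    rw [h] at this
    exact List.eq_of_mem_replicate this
  have hl2 := List.eq_replicate_of_mem hl'
  rw [hl2, List.prod_replicate, ← apow_mul] at e
  have := congrArg FreeMonoid.length e
  rw [apow_length, apow_length] at this
  exact ⟨_, this.symm⟩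

/-- If all words of `M` have length at most `L`, a factorization of `u * z` over `M` has a cut
at distance at most `L` after `u`. -/
lemma cut_list {M : Set (FreeMonoid A)} {L : ℕ} (hL : ∀ w ∈ M, w.length ≤ L) :
    ∀ (l : List (FreeMonoid A)), (∀ w ∈ l, w ∈ M) → ∀ u z : FreeMonoid A, u * z = l.prod →
      ∃ z₁ q, z = z₁ * q ∧ z₁.length ≤ L ∧ u * z₁ ∈ Submonoid.closure M ∧
        q ∈ Submonoid.closure M := by
  intro l
  induction l with
  | nil =>
    intro _ u z h
    have hlen := congrArg FreeMonoid.length h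
    rw [FreeMonoid.length_mul] at hlen
    have h0 : (List.prod ([] : List (FreeMonoid A))).length = 0 := rfl
    have hu : u = 1 := FreeMonoid.length_eq_zero.1 (by omega)
    have hz : z = 1 := FreeMonoid.length_eq_zero.1 (by omega)
    subst hu hz
    exact ⟨1, 1, rfl, Nat.zero_le _, by simp, by simp⟩
  | cons m l ih =>
    intro hl u z h
    rw [List.prod_cons] at h
    rcases le_total m.length u.length with hc | hc
    · obtain ⟨d, rfl, hd⟩ := levi h.symm hc
      obtain ⟨z₁, q, h1, h2, h3, h4⟩ := ih (fun w hw => hl w (List.mem_cons_of_mem _ hw)) d z hd.symm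
      refine ⟨z₁, q, h1, h2, ?_, h4⟩
      rw [mul_assoc]
      exact mul_mem (Submonoid.subset_closure (hl m List.mem_cons_self)) h3
    · obtain ⟨d, rfl, hd⟩ := levi h hc
      have hm := hl _ List.mem_cons_self
      refine ⟨d, l.prod, hd, ?_, Submonoid.subset_closure hm,
        Submonoid.list_prod_mem _ fun x hx =>
          Submonoid.subset_closure (hl x (List.mem_cons_of_mem _ hx))⟩
      have := hL _ hm
      rw [FreeMonoid.length_mul] at this
      omega

/-- A long enough block of `a`'s in a word of `M*` contains a cut of its factorization. -/
lemma cut_apow {M : Set (FreeMonoid A)} {L : ℕ} (hL : ∀ w ∈ M, w.length ≤ L) {a : A} {R : ℕ}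
    (hR : L ≤ R) {u v : FreeMonoid A} (h : u * (apow a R * v) ∈ Submonoid.closure M) :
    ∃ s t, s + t = R ∧ u * apow a s ∈ Submonoid.closure M ∧
      apow a t * v ∈ Submonoid.closure M := by
  obtain ⟨l, hl, e⟩ := Submonoid.exists_list_of_mem_closure h
  obtain ⟨z₁, q, h1, h2, h3, h4⟩ := cut_list hL l hl u _ e.symm
  obtain ⟨d, h5, h6⟩ := levi h1.symm (by rw [apow_length]; omega)
  obtain ⟨s, t, hst, rfl, rfl⟩ := apow_eq_mul h5
  exact ⟨s, t, hst, h3, h6 ▸ h4⟩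

/-! ### Maximal codes are complete -/

lemma split_insert {M : Set (FreeMonoid A)} {y : FreeMonoid A} :
    ∀ l : List (FreeMonoid A), (∀ w ∈ l, w ∈ insert y M) →
      (∀ w ∈ l, w ∈ M) ∨ ∃ l₁ l₂, l = l₁ ++ y :: l₂ ∧ ∀ w ∈ l₁, w ∈ M := by
  intro l
  induction l with
  | nil => intro _; left; simp
  | cons x l ih =>
    intro hl
    rcases hl x List.mem_cons_self with rfl | hx
    · exact Or.inr ⟨[], l, rfl, by simp⟩
    · rcases ih (fun w hw => hl w (List.mem_cons_of_mem _ hw)) with h | ⟨l₁, l₂, rfl, h⟩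
      · left
        intro w hw
        rcases List.mem_cons.1 hw with rfl | hw
        · exact hx
        · exact h w hw
      · right
        refine ⟨x :: l₁, l₂, rfl, ?_⟩
        intro w hw
        rcases List.mem_cons.1 hw with rfl | hw
        · exact hx
        · exact h w hw

/-- Two words `p y q = p' y q'` with `p, p' ∈ M*` and `y` unbordered and not a factor of `M*`
must satisfy `|p'| ≤ |p|`: otherwise the displayed occurrence of `y` on the left either lies
inside `p'` or properly overlaps the one on the right. -/
lemma first_occ {M : Set (FreeMonoid A)} {y : FreeMonoid A}
    (hub : ∀ d e f, y = d * e → y = e * f → d = 1 ∨ e = 1)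
    (hnf : ∀ u v, u * y * v ∉ Submonoid.closure M)
    {p q p' q' : FreeMonoid A} (hp' : p' ∈ Submonoid.closure M)
    (h : p * (y * q) = p' * (y * q')) : p'.length ≤ p.length := by
  by_contra hlt
  push Not at hlt
  obtain ⟨d, rfl, hd⟩ := levi h hlt.le
  rcases le_total y.length d.length with hc | hc
  · obtain ⟨f, rfl, _⟩ := levi hd hc
    exact hnf p f (by rwa [mul_assoc])
  · obtain ⟨e, he, hq⟩ := levi hd.symm hc
    obtain ⟨f, hf, _⟩ := levi hq.symm (by
      have := congrArg FreeMonoid.length he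
      rw [FreeMonoid.length_mul] at this; omega)
    have h1 : (1 : FreeMonoid A).length = 0 := rfl
    rcases hub d e f he hf with rfl | rfl
    · rw [mul_one] at hlt; omega
    · rw [mul_one] at he
      exact hnf p 1 (by rwa [mul_one, he])

lemma code_insert {M : Set (FreeMonoid A)} (hM : IsCode M) {y : FreeMonoid A}
    (hub : ∀ d e f, y = d * e → y = e * f → d = 1 ∨ e = 1)
    (hnf : ∀ u v, u * y * v ∉ Submonoid.closure M) : IsCode (insert y M) := by
  have hcl : ∀ l : List (FreeMonoid A), (∀ w ∈ l, w ∈ M) → l.prod ∈ Submonoid.closure M :=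
    fun l hl => Submonoid.list_prod_mem _ fun x hx => Submonoid.subset_closure (hl x hx)
  have key : ∀ (k : ℕ) (l m : List (FreeMonoid A)), l.length ≤ k → (∀ w ∈ l, w ∈ insert y M) →
      (∀ w ∈ m, w ∈ insert y M) → l.prod = m.prod → l = m := by
    intro k
    induction k with
    | zero =>
      intro l m hk hl hm e
      have : l = [] := List.length_eq_zero_iff.1 (by omega)
      subst this
      rcases split_insert m hm with h | ⟨m₁, m₂, rfl, h⟩
      · exact hM _ _ (by simp) h e
      · exfalso
        refine hnf m₁.prod m₂.prod ?_
        rw [List.prod_append, List.prod_cons, ← mul_assoc] at e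
        rw [← e]; simp
    | succ k ih =>
      intro l m hk hl hm e
      rcases split_insert l hl with h | ⟨l₁, l₂, rfl, h⟩ <;>
        rcases split_insert m hm with h' | ⟨m₁, m₂, rfl, h'⟩
      · exact hM _ _ h h' e
      · exfalso
        refine hnf m₁.prod m₂.prod ?_
        rw [List.prod_append, List.prod_cons, ← mul_assoc] at e
        rw [← e]; exact hcl _ h
      · exfalso
        refine hnf l₁.prod l₂.prod ?_
        rw [List.prod_append, List.prod_cons, ← mul_assoc] at e
        rw [e]; exact hcl _ h'
      · rw [List.prod_append, List.prod_cons, List.prod_append, List.prod_cons] at e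
        have hlen := le_antisymm (first_occ hub hnf (hcl _ h) e.symm)
          (first_occ hub hnf (hcl _ h') e)
        obtain ⟨d, hd, _⟩ := levi e hlen.le
        have hd1 : d = 1 := by
          have := congrArg FreeMonoid.length hd
          rw [FreeMonoid.length_mul] at this
          exact FreeMonoid.length_eq_zero.1 (by omega)
        rw [hd1, mul_one] at hd
        rw [hd] at e
        have e' := mul_left_cancel (mul_left_cancel e)
        have h12 : l₁ = m₁ := hM _ _ h h' hd.symm
        have h22 : l₂ = m₂ := by
          refine ih l₂ m₂ ?_ (fun w hw => hl w ?_) (fun w hw => hm w ?_) e'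
          · simp at hk; omega
          · simp [hw]
          · simp [hw]
        rw [h12, h22]
  exact fun l m hl hm e => key _ l m le_rfl hl hm e

/-- If `w` starts with a letter `c ≠ d`, then `w d^|w|` is unbordered. -/
lemma unbordered {c d : A} (hcd : c ≠ d) (w' : FreeMonoid A) (p e f : FreeMonoid A)
    (hp : (FreeMonoid.of c * w') * apow d (FreeMonoid.of c * w').length = p * e)
    (he : (FreeMonoid.of c * w') * apow d (FreeMonoid.of c * w').length = e * f) :
    p = 1 ∨ e = 1 := by
  obtain ⟨w, hw⟩ : ∃ w, w = FreeMonoid.of c * w' := ⟨_, rfl⟩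
  rw [← hw] at hp he
  -- A short suffix of `w d^|w|` is a power of `d`.
  have short : ∀ x z, w * apow d w.length = x * z → z.length ≤ w.length →
      ∃ t, z = apow d t := by
    intro x z h hz
    have hl := congrArg FreeMonoid.length h
    rw [FreeMonoid.length_mul, FreeMonoid.length_mul, apow_length] at hl
    obtain ⟨g, _, hg⟩ := levi h (by omega)
    obtain ⟨_, t, _, _, ht⟩ := apow_eq_mul hg
    exact ⟨t, ht⟩
  -- A prefix of `w d^|w|` that is a power of `d` is empty, as `w` starts with `c`.
  have start : ∀ t x, w * apow d w.length = apow d t * x → apow d t = 1 := by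
    intro t x h
    cases t with
    | zero => rfl
    | succ t =>
      exfalso
      rw [Nat.add_comm, apow_add, hw] at h
      have h' := congrArg (fun w => (FreeMonoid.toList w).head?) h
      simp [apow] at h'
      exact hcd h'
  have hl := congrArg FreeMonoid.length hp
  rw [FreeMonoid.length_mul, FreeMonoid.length_mul, apow_length] at hl
  have hl' := congrArg FreeMonoid.length he
  rw [FreeMonoid.length_mul, FreeMonoid.length_mul, apow_length] at hl'
  rcases le_total e.length w.length with hc | hc
  · obtain ⟨t, rfl⟩ := short _ _ hp hc
    exact Or.inr (start _ _ he)
  · -- From `p e = e f`, the words `p` and `f` have the same letters, and `f` is a power of `d`.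
    obtain ⟨t, rfl⟩ := short _ _ he (by omega)
    left
    have hperm : (FreeMonoid.toList p).Perm (List.replicate t d) := by
      have h1 : (FreeMonoid.toList p ++ FreeMonoid.toList e)
          = (FreeMonoid.toList e ++ List.replicate t d) := by
        have := congrArg FreeMonoid.toList (hp.symm.trans he)
        rwa [FreeMonoid.toList_mul, FreeMonoid.toList_mul, toList_apow] at this
      have h2 : (FreeMonoid.toList p ++ FreeMonoid.toList e).Perm
          (List.replicate t d ++ FreeMonoid.toList e) := by
        rw [h1]; exact List.perm_append_comm
      exact (List.perm_append_right_iff _).1 h2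
    have hpt : p = apow d t := by
      apply FreeMonoid.toList.injective
      rw [toList_apow]
      exact List.perm_replicate.1 hperm
    rw [hpt] at hp ⊢
    exact start _ _ hp

lemma complete {M : Set (FreeMonoid A)} (hM : IsMaximalCode M) {a b : A} (hab : a ≠ b)
    (w : FreeMonoid A) : ∃ u v, u * w * v ∈ Submonoid.closure M := by
  by_contra hcon
  push Not at hcon
  have hform : ∃ c w', w = FreeMonoid.of c * w' := by
    rcases hw : FreeMonoid.toList w with _ | ⟨c, w'⟩
    · exfalso
      have : w = 1 := hw
      apply hcon 1 1
      rw [this]; simp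
    · exact ⟨c, FreeMonoid.ofList w', hw⟩
  obtain ⟨c, w', rfl⟩ := hform
  obtain ⟨d, hcd⟩ : ∃ d, c ≠ d := by
    by_cases h : c = a
    · exact ⟨b, h ▸ hab⟩
    · exact ⟨a, h⟩
  set w := FreeMonoid.of c * w' with hw
  have hnf : ∀ u v, u * (w * apow d w.length) * v ∉ Submonoid.closure M := by
    intro u v h
    apply hcon u (apow d w.length * v)
    simpa only [mul_assoc] using h
  have hins := hM.2 _ (code_insert hM.1 (unbordered hcd w') hnf) (Set.subset_insert _ _)
  have hy : w * apow d w.length ∈ M := by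
    rw [← hins]; exact Set.mem_insert _ _
  exact hnf 1 1 (by simpa using Submonoid.subset_closure hy)

/-! ### The sets `Cword` -/

section Cw

variable {a b : A} {n : ℕ} {M : Set (FreeMonoid A)}

lemma lt_of_bay_mem (hab : a ≠ b) (hn : 1 ≤ n) {ω : FreeMonoid A} {i j : ℕ}
    (h : bay a b i j ∈ Cword a b n M ω) : i < n ∧ j < n := by
  obtain ⟨i', j', _, e⟩ := h
  obtain ⟨rfl, rfl⟩ := bay_inj hab e
  exact ⟨Nat.mod_lt _ hn, Nat.mod_lt _ hn⟩

lemma apow_mul_mem (han : apow a n ∈ M) (t : ℕ) : apow a (n * t) ∈ Submonoid.closure M := by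
  rw [apow_mul]; exact pow_mem (Submonoid.subset_closure han) t

/-- Multiples of `n` may be added to both exponents. -/
lemma pad (han : apow a n ∈ M) {ω : FreeMonoid A} {i j : ℕ} (s t : ℕ)
    (h : apow a i * ω * apow a j ∈ Submonoid.closure M) :
    apow a (i + n * s) * ω * apow a (j + n * t) ∈ Submonoid.closure M := by
  have := mul_mem (mul_mem (apow_mul_mem han s) h) (apow_mul_mem han t)
  rw [Nat.add_comm i, apow_add, apow_add]
  simpa only [mul_assoc] using this

/-- All bayonets of `Cword a b n M ω` are witnessed by the same shift `n * P` of the exponents. -/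
lemma uniform (hab : a ≠ b) (hn : 1 ≤ n) (han : apow a n ∈ M) (ω : FreeMonoid A) :
    ∃ P, ∀ i j, bay a b i j ∈ Cword a b n M ω →
      apow a (i + n * P) * ω * apow a (j + n * P) ∈ Submonoid.closure M := by
  have h1 : ∀ p : ℕ × ℕ, ∃ P, bay a b p.1 p.2 ∈ Cword a b n M ω →
      apow a (p.1 + n * P) * ω * apow a (p.2 + n * P) ∈ Submonoid.closure M := by
    rintro ⟨i, j⟩
    by_cases h : bay a b i j ∈ Cword a b n M ω
    · obtain ⟨i', j', hm, e⟩ := h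
      obtain ⟨rfl, rfl⟩ := bay_inj hab e
      refine ⟨i' / n + j' / n, fun _ => ?_⟩
      convert pad han (j' / n) (i' / n) hm using 3
      · congr 1
        conv_rhs => rw [← Nat.mod_add_div i' n]
        ring
      · conv_rhs => rw [← Nat.mod_add_div j' n]
        ring
    · exact ⟨0, fun h' => absurd h' h⟩
  choose f hf using h1
  refine ⟨(Finset.range n ×ˢ Finset.range n).sup f, fun i j h => ?_⟩
  obtain ⟨hi, hj⟩ := lt_of_bay_mem hab hn h
  have hle : f (i, j) ≤ (Finset.range n ×ˢ Finset.range n).sup f :=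
    Finset.le_sup (f := f) (by simp [hi, hj])
  obtain ⟨d, hd⟩ := Nat.exists_eq_add_of_le hle
  rw [hd]
  convert pad han d d (hf (i, j) h) using 3
  · congr 1; ring
  · ring

/-- Two bayonets composable with the same residue and the same outer exponents coincide. -/
lemma unamb (hM : IsCode M) (hab : a ≠ b) (hn : 1 ≤ n) (han : apow a n ∈ M)
    {ω ω' : FreeMonoid A} {i j k l j' k' : ℕ}
    (h1 : bay a b i j ∈ Cword a b n M ω) (h2 : bay a b k l ∈ Cword a b n M ω')
    (h3 : bay a b i j' ∈ Cword a b n M ω) (h4 : bay a b k' l ∈ Cword a b n M ω')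
    (hr : (j + k) % n = (j' + k') % n) : j = j' ∧ k = k' := by
  obtain ⟨P, hP⟩ := uniform hab hn han ω
  obtain ⟨Q, hQ⟩ := uniform hab hn han ω'
  -- If `j ≤ j'`, stability puts the power of `a` with exponent `j' - j < n` into `M*`.
  have key : ∀ {j k j' k' : ℕ}, j ≤ j' →
      bay a b i j ∈ Cword a b n M ω → bay a b k l ∈ Cword a b n M ω' →
      bay a b i j' ∈ Cword a b n M ω → bay a b k' l ∈ Cword a b n M ω' →
      (j + k) % n = (j' + k') % n → j = j' ∧ k = k' := by
    intro j k j' k' hjj h1 h2 h3 h4 hr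
    obtain ⟨d, rfl⟩ := Nat.exists_eq_add_of_le hjj
    have hk := (lt_of_bay_mem hab hn h2).1
    have hk' := (lt_of_bay_mem hab hn h4).1
    have hj' := (lt_of_bay_mem hab hn h3).2
    have hmod : k ≡ d + k' [MOD n] := by
      have : j + k ≡ j + (d + k') [MOD n] := by
        unfold Nat.ModEq; rw [hr, Nat.add_assoc]
      exact Nat.ModEq.add_left_cancel' j this
    have hd : n ∣ d := by
      have m1 := hP _ _ h1
      have m3 := hP _ _ h3
      have m4 := pad han 1 0 (hQ _ _ h4)
      have m2 : apow a d * (apow a (k' + n * Q + n * 1) * ω' * apow a (l + n * Q + n * 0))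
          ∈ Submonoid.closure M := by
        have hk2 : k ≤ d + k' + n := by omega
        obtain ⟨c, hc⟩ := (Nat.modEq_iff_dvd' hk2).1
          (hmod.trans (by simp [Nat.ModEq]))
        have hc' : d + (k' + n * Q + n * 1) = (k + n * Q) + n * c := by
          rw [← hc]; omega
        have := pad han c 0 (hQ _ _ h2)
        rw [← hc', apow_add] at this
        simpa only [mul_assoc] using this
      refine dvd_of_apow_mem hM hn han (stable_closure hM m1 m4 ?_ m2)
      rw [show j + d + n * P = (j + n * P) + d by ring, apow_add a (j + n * P) d] at m3
      simpa only [mul_assoc] using m3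
    have hd0 : d = 0 := Nat.eq_zero_of_dvd_of_lt hd (by omega)
    subst hd0
    refine ⟨rfl, ?_⟩
    rw [Nat.zero_add] at hmod
    exact Nat.ModEq.eq_of_lt_of_lt hmod hk hk'
  rcases le_total j j' with h | h
  · exact key h h1 h2 h3 h4 hr
  · obtain ⟨e1, e2⟩ := key h h3 h4 h1 h2 hr.symm
    exact ⟨e1.symm, e2.symm⟩

/-- Composition of the sets `Cword` corresponds to inserting a long block of `a`'s. -/
lemma comp_eq (hMfin : M.Finite) (hab : a ≠ b) (hn : 1 ≤ n) (han : apow a n ∈ M)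
    (ω ω' : FreeMonoid A) {r : ℕ} (hr : r < n) :
    ∃ R, comp a b n r (Cword a b n M ω) (Cword a b n M ω')
      = Cword a b n M (ω * apow a R * ω') := by
  obtain ⟨P, hP⟩ := uniform hab hn han ω
  obtain ⟨Q, hQ⟩ := uniform hab hn han ω'
  obtain ⟨L, hL⟩ : ∃ L, ∀ w ∈ M, w.length ≤ L := by
    obtain ⟨L, hL⟩ := (hMfin.image FreeMonoid.length).bddAbove
    exact ⟨L, fun w hw => hL (Set.mem_image_of_mem _ hw)⟩
  have hLn : L ≤ n * L := Nat.le_mul_of_pos_left L hn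
  refine ⟨r + n * (P + Q + 1 + L), Set.ext fun w => ⟨?_, ?_⟩⟩
  · rintro ⟨i, j, k, l, h1, h2, h3, rfl⟩
    obtain ⟨hi, hj⟩ := lt_of_bay_mem hab hn h1
    obtain ⟨hk, hl⟩ := lt_of_bay_mem hab hn h2
    refine ⟨i + n * P, l + n * Q, ?_, ?_⟩
    · -- As `j, k < n`, the quotient of `j + k` by `n` is `0` or `1`.
      obtain ⟨c, hc⟩ : ∃ c, (j + k) / n + c = 1 :=
        ⟨_, Nat.add_sub_cancel' (Nat.le_of_lt_succ (Nat.div_lt_of_lt_mul (by omega)))⟩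
      have hjk : r + n * (P + Q + 1 + L) = (j + n * P) + n * (c + L) + (k + n * Q) := by
        have := Nat.mod_add_div (j + k) n
        rw [h3] at this
        rw [← hc]
        linear_combination this
      have := mul_mem (mul_mem (hP _ _ h1) (apow_mul_mem han (c + L))) (hQ _ _ h2)
      rw [hjk, apow_add a (j + n * P + n * (c + L)), apow_add a (j + n * P) (n * (c + L))]
      simpa only [mul_assoc] using this
    · rw [Nat.add_mul_mod_self_left, Nat.add_mul_mod_self_left, Nat.mod_eq_of_lt hi,
        Nat.mod_eq_of_lt hl]
  · rintro ⟨i, l, h, rfl⟩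
    have h' : (apow a i * ω) * (apow a (r + n * (P + Q + 1 + L)) * (ω' * apow a l))
        ∈ Submonoid.closure M := by
      simpa only [mul_assoc] using h
    obtain ⟨s, t, hst, m1, m2⟩ := cut_apow hL (by
      rw [Nat.mul_add]; omega) h'
    refine ⟨i % n, s % n, t % n, l % n, ⟨i, s, m1, rfl⟩, ⟨t, l, ?_, rfl⟩, ?_, rfl⟩
    · simpa only [mul_assoc] using m2
    · rw [← Nat.add_mod, hst, Nat.add_mul_mod_self_left, Nat.mod_eq_of_lt hr]

lemma Cword_nonempty (hMfin : M.Finite) (hM : IsMaximalCode M) (hab : a ≠ b)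
    (ω : FreeMonoid A) : ∃ i j, bay a b i j ∈ Cword a b n M ω := by
  obtain ⟨L, hL⟩ : ∃ L, ∀ w ∈ M, w.length ≤ L := by
    obtain ⟨L, hL⟩ := (hMfin.image FreeMonoid.length).bddAbove
    exact ⟨L, fun w hw => hL (Set.mem_image_of_mem _ hw)⟩
  obtain ⟨u, v, h⟩ := complete hM hab (apow a L * ω * apow a L)
  have h' : u * (apow a L * (ω * apow a L * v)) ∈ Submonoid.closure M := by
    simpa only [mul_assoc] using h
  obtain ⟨s, t, _, _, h2⟩ := cut_apow hL le_rfl h'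
  have h3 : (apow a t * ω) * (apow a L * v) ∈ Submonoid.closure M := by
    simpa only [mul_assoc] using h2
  obtain ⟨s', t', _, h4, _⟩ := cut_apow hL le_rfl h3
  exact ⟨t % n, s' % n, t, s', h4, rfl⟩

open Classical in
/-- The set of pairs of exponents of the bayonets in `Cword a b n M ω`. -/
noncomputable def expo (a b : A) (n : ℕ) (M : Set (FreeMonoid A)) (ω : FreeMonoid A) :
    Finset (ℕ × ℕ) :=
  (Finset.range n ×ˢ Finset.range n).filter fun p => bay a b p.1 p.2 ∈ Cword a b n M ω

lemma mem_expo (hab : a ≠ b) (hn : 1 ≤ n) {ω : FreeMonoid A} {p : ℕ × ℕ} :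
    p ∈ expo a b n M ω ↔ bay a b p.1 p.2 ∈ Cword a b n M ω := by
  classical
  simp only [expo, Finset.mem_filter, Finset.mem_product, Finset.mem_range]
  exact ⟨fun h => h.2, fun h => ⟨lt_of_bay_mem hab hn h, h⟩⟩

lemma ncard_Cword (hab : a ≠ b) (hn : 1 ≤ n) (ω : FreeMonoid A) :
    (Cword a b n M ω).ncard = (expo a b n M ω).card := by
  have h : Cword a b n M ω = (fun p : ℕ × ℕ => bay a b p.1 p.2) '' (expo a b n M ω : Set _) := by
    ext w
    constructor
    · rintro ⟨i, j, h, rfl⟩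
      exact ⟨(i % n, j % n), (mem_expo hab hn).2 ⟨i, j, h, rfl⟩, rfl⟩
    · rintro ⟨p, hp, rfl⟩
      exact (mem_expo hab hn).1 hp
  rw [h, Set.ncard_image_of_injective _ ?_, Set.ncard_coe_finset]
  rintro ⟨i, j⟩ ⟨k, l⟩ e
  obtain ⟨rfl, rfl⟩ := bay_inj hab e
  rfl

/-- Sorting the pairs of bayonets by residue: the sizes of the `n` compositions of two sets
`Cword` add up to the product of the sizes of these sets. -/
lemma card_mul (hMfin : M.Finite) (hM : IsCode M) (hab : a ≠ b) (hn : 1 ≤ n)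
    (han : apow a n ∈ M) (ω ω' : FreeMonoid A) :
    ∃ g : ℕ → FreeMonoid A, (expo a b n M ω).card * (expo a b n M ω').card
      = ∑ r ∈ Finset.range n, (expo a b n M (g r)).card := by
  have h1 : ∀ r, ∃ w, r < n → comp a b n r (Cword a b n M ω) (Cword a b n M ω')
      = Cword a b n M w := by
    intro r
    by_cases hr : r < n
    · obtain ⟨R, hR⟩ := comp_eq hMfin hab hn han ω ω' hr
      exact ⟨_, fun _ => hR⟩
    · exact ⟨1, fun h => absurd h hr⟩
  choose g hg using h1
  refine ⟨g, ?_⟩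
  rw [← Finset.card_product, Finset.card_eq_sum_card_fiberwise
    (f := fun q : (ℕ × ℕ) × (ℕ × ℕ) => (q.1.2 + q.2.1) % n) (t := Finset.range n)
    (fun q _ => Finset.mem_coe.2 (Finset.mem_range.2 (Nat.mod_lt _ hn)))]
  refine Finset.sum_congr rfl fun r hr => ?_
  rw [Finset.mem_range] at hr
  refine Finset.card_bij (fun q _ => (q.1.1, q.2.2)) ?_ ?_ ?_
  · rintro ⟨⟨i, j⟩, k, l⟩ hq
    rw [Finset.mem_filter, Finset.mem_product, mem_expo hab hn, mem_expo hab hn] at hq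
    rw [mem_expo hab hn, ← hg r hr]
    exact ⟨i, j, k, l, hq.1.1, hq.1.2, hq.2, rfl⟩
  · rintro ⟨⟨i, j⟩, k, l⟩ hq ⟨⟨i', j'⟩, k', l'⟩ hq' e
    rw [Finset.mem_filter, Finset.mem_product, mem_expo hab hn, mem_expo hab hn] at hq hq'
    simp only [Prod.mk.injEq] at e
    obtain ⟨rfl, rfl⟩ := e
    obtain ⟨rfl, rfl⟩ := unamb hM hab hn han hq.1.1 hq.1.2 hq'.1.1 hq'.1.2
      (hq.2.trans hq'.2.symm)
    rfl
  · rintro ⟨i, l⟩ hq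
    rw [mem_expo hab hn, ← hg r hr] at hq
    obtain ⟨i', j, k, l', h1, h2, h3, e⟩ := hq
    obtain ⟨rfl, rfl⟩ := bay_inj hab e
    refine ⟨((i, j), (k, l)), ?_, rfl⟩
    rw [Finset.mem_filter, Finset.mem_product, mem_expo hab hn, mem_expo hab hn]
    exact ⟨⟨h1, h2⟩, h3⟩

lemma card_expo (hMfin : M.Finite) (hM : IsMaximalCode M) (hab : a ≠ b) (hn : 1 ≤ n)
    (han : apow a n ∈ M) (ω : FreeMonoid A) : (expo a b n M ω).card = n := by
  have hpos : ∀ ω, 0 < (expo a b n M ω).card := by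
    intro ω
    obtain ⟨i, j, h⟩ := Cword_nonempty (n := n) hMfin hM hab ω
    exact Finset.card_pos.2 ⟨(i, j), (mem_expo hab hn).2 h⟩
  have hbd : ∀ ω, (expo a b n M ω).card ≤ n * n := by
    intro ω
    have hsub : expo a b n M ω ⊆ Finset.range n ×ˢ Finset.range n := by
      intro p hp
      have := lt_of_bay_mem hab hn ((mem_expo hab hn).1 hp)
      simpa using this
    simpa using Finset.card_le_card hsub
  apply le_antisymm
  · -- The square of the largest cardinality `K` is a sum of `n` terms `≤ K`.
    obtain ⟨ω₁, h₁⟩ : ∃ ω₁, ∀ ω, (expo a b n M ω).card ≤ (expo a b n M ω₁).card := by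
      have hfin : (Set.range fun ω => (expo a b n M ω).card).Finite :=
        (Set.finite_Iic (n * n)).subset (by rintro _ ⟨ω, rfl⟩; exact hbd ω)
      obtain ⟨ω₁, h⟩ := (Set.range_nonempty _).csSup_mem hfin
      refine ⟨ω₁, fun ω => ?_⟩
      simp only at h
      rw [h]
      exact le_csSup hfin.bddAbove ⟨ω, rfl⟩
    obtain ⟨g, hg⟩ := card_mul (b := b) hMfin hM.1 hab hn han ω₁ ω₁
    have h2 := Finset.sum_le_card_nsmul (Finset.range n) (fun r => (expo a b n M (g r)).card) _
      (fun r _ => h₁ (g r))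
    rw [← hg, Finset.card_range, smul_eq_mul] at h2
    exact (h₁ ω).trans (Nat.le_of_mul_le_mul_right h2 (hpos ω₁))
  · -- The square of the smallest cardinality `m` is a sum of `n` terms `≥ m`.
    obtain ⟨ω₁, h₁⟩ : ∃ ω₁, ∀ ω, (expo a b n M ω₁).card ≤ (expo a b n M ω).card := by
      obtain ⟨ω₁, h⟩ := Nat.sInf_mem (Set.range_nonempty fun ω => (expo a b n M ω).card)
      refine ⟨ω₁, fun ω => ?_⟩
      simp only at h
      rw [h]
      exact Nat.sInf_le ⟨ω, rfl⟩
    obtain ⟨g, hg⟩ := card_mul (b := b) hMfin hM.1 hab hn han ω₁ ω₁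
    have h2 := Finset.card_nsmul_le_sum (Finset.range n) (fun r => (expo a b n M (g r)).card) _
      (fun r _ => h₁ (g r))
    rw [← hg, Finset.card_range, smul_eq_mul] at h2
    exact (Nat.le_of_mul_le_mul_right h2 (hpos ω₁)).trans (h₁ ω)

/-- Substituting `a^(nP) ω a^(nP)` for `b` sends words of `{a^n} ∪ Cword a b n M ω` into `M*`.
At the first difference between two factorizations, stability of `M*` would then produce a
power `a^d ∈ M*` with `0 < d < n`. -/
lemma code_Cword (hM : IsCode M) (hab : a ≠ b) (hn : 1 ≤ n) (han : apow a n ∈ M)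
    (ω : FreeMonoid A) : IsCode (insert (apow a n) (Cword a b n M ω)) := by
  classical
  obtain ⟨P, hP⟩ := uniform hab hn han ω
  set φ : FreeMonoid A →* FreeMonoid A := FreeMonoid.lift fun c =>
    if c = b then apow a (n * P) * ω * apow a (n * P) else FreeMonoid.of c with hφ
  have hφa : ∀ i, φ (apow a i) = apow a i := by
    intro i
    simp [apow, hφ, hab]
  have hφbay : ∀ i j, φ (bay a b i j) = apow a (i + n * P) * ω * apow a (j + n * P) := by
    intro i j
    unfold bay
    rw [map_mul, map_mul, hφa, hφa, apow_add, Nat.add_comm j, apow_add]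
    simp [hφ, mul_assoc]
  have hform : ∀ w ∈ insert (apow a n) (Cword a b n M ω), w = apow a n ∨
      ∃ i j, i < n ∧ j < n ∧ w = bay a b i j ∧ w ∈ Cword a b n M ω := by
    rintro w (rfl | hw)
    · exact Or.inl rfl
    · right
      obtain ⟨i, j, _, rfl⟩ := id hw
      exact ⟨_, _, Nat.mod_lt _ hn, Nat.mod_lt _ hn, rfl, hw⟩
  have hφmem : ∀ w ∈ insert (apow a n) (Cword a b n M ω), φ w ∈ Submonoid.closure M := by
    intro w hw
    rcases hform w hw with rfl | ⟨i, j, _, _, rfl, h⟩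
    · rw [hφa]; exact Submonoid.subset_closure han
    · rw [hφbay]; exact hP _ _ h
  have hφl : ∀ l : List (FreeMonoid A), (∀ w ∈ l, w ∈ insert (apow a n) (Cword a b n M ω)) →
      φ l.prod ∈ Submonoid.closure M := by
    intro l hl
    rw [map_list_prod]
    refine Submonoid.list_prod_mem _ fun x hx => ?_
    obtain ⟨w, hw, rfl⟩ := List.mem_map.1 hx
    exact hφmem w (hl w hw)
  have hne : ∀ w ∈ insert (apow a n) (Cword a b n M ω), 0 < w.length := by
    intro w hw
    rcases hform w hw with rfl | ⟨i, j, _, _, rfl, h⟩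
    · rw [apow_length]; omega
    · unfold bay
      rw [FreeMonoid.length_mul, FreeMonoid.length_mul, FreeMonoid.length_of]; omega
  -- `a^n` and `a^i b a^j` with `i < n` are not prefixes of the same word.
  have hmix : ∀ i j u v, i < n → apow a n * u = bay a b i j * v → False := by
    intro i j u v hi h
    obtain ⟨d, rfl⟩ := Nat.exists_eq_add_of_lt hi
    unfold bay at h
    rw [show i + d + 1 = i + (1 + d) by ring, apow_add a i (1 + d), mul_assoc, mul_assoc, mul_assoc,
      mul_left_cancel_iff,
      apow_add] at h
    have h' := congrArg (fun w => (FreeMonoid.toList w).head?) h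
    simp [apow] at h'
    exact hab h'
  have hbb : ∀ i j j' u v, j ≤ j' → j' < n → bay a b i j ∈ Cword a b n M ω →
      bay a b i j' ∈ Cword a b n M ω → φ u ∈ Submonoid.closure M → φ v ∈ Submonoid.closure M →
      bay a b i j * u = bay a b i j' * v → j = j' := by
    intro i j j' u v hjj hj' h1 h2 hu hv h
    obtain ⟨d, rfl⟩ := Nat.exists_eq_add_of_le hjj
    have hud : u = apow a d * v := by
      unfold bay at h
      rw [apow_add] at h
      simp only [mul_assoc, mul_left_cancel_iff] at h
      exact h
    rw [hud, map_mul, hφa] at hu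
    have m1 := hP _ _ h1
    have m2 := hP _ _ h2
    rw [show j + d + n * P = j + n * P + d by ring, apow_add a (j + n * P), ← mul_assoc] at m2
    have hd := Nat.eq_zero_of_dvd_of_lt
      (dvd_of_apow_mem hM hn han (stable_closure hM m1 hv m2 hu)) (by omega)
    omega
  intro l
  induction l with
  | nil =>
    intro m _ hm e
    cases m with
    | nil => rfl
    | cons y m =>
      exfalso
      have hy := hne y (hm y List.mem_cons_self)
      have := congrArg FreeMonoid.length e
      rw [List.prod_cons, FreeMonoid.length_mul] at this
      have h0 : (List.prod ([] : List (FreeMonoid A))).length = 0 := rfl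
      omega
  | cons x l ih =>
    intro m hl hm e
    cases m with
    | nil =>
      exfalso
      have hy := hne x (hl x List.mem_cons_self)
      have := congrArg FreeMonoid.length e
      rw [List.prod_cons, FreeMonoid.length_mul] at this
      have h0 : (List.prod ([] : List (FreeMonoid A))).length = 0 := rfl
      omega
    | cons y m =>
      have hx := hl x List.mem_cons_self
      have hy := hm y List.mem_cons_self
      have hl' : ∀ w ∈ l, w ∈ insert (apow a n) (Cword a b n M ω) :=
        fun w hw => hl w (List.mem_cons_of_mem _ hw)
      have hm' : ∀ w ∈ m, w ∈ insert (apow a n) (Cword a b n M ω) :=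
        fun w hw => hm w (List.mem_cons_of_mem _ hw)
      rw [List.prod_cons, List.prod_cons] at e
      have hxy : x = y := by
        rcases hform x hx with rfl | ⟨i, j, hi, hj, rfl, h1⟩ <;>
          rcases hform y hy with rfl | ⟨i', j', hi', hj', rfl, h2⟩
        · rfl
        · exact (hmix _ _ _ _ hi' e).elim
        · exact (hmix _ _ _ _ hi e.symm).elim
        · have hii : i = i' := by
            unfold bay at e
            simp only [mul_assoc] at e
            exact (apow_of_inj hab e).1
          subst hii
          rcases le_total j j' with hc | hc
          · rw [hbb i j j' _ _ hc hj' h1 h2 (hφl l hl') (hφl m hm') e]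
          · rw [hbb i j' j _ _ hc hj h2 h1 (hφl m hm') (hφl l hl') e.symm]
      subst hxy
      rw [ih m hl' hm' (mul_left_cancel e)]

lemma cbc_Cword (hMfin : M.Finite) (hM : IsMaximalCode M) (hab : a ≠ b) (hn : 1 ≤ n)
    (han : apow a n ∈ M) (ω : FreeMonoid A) : IsCbc a b n (Cword a b n M ω) := by
  refine ⟨?_, ?_, code_Cword hM.1 hab hn han ω⟩
  · rintro w ⟨i, j, _, rfl⟩
    exact ⟨_, Nat.mod_lt _ hn, _, Nat.mod_lt _ hn, rfl⟩
  · rw [ncard_Cword hab hn, card_expo hMfin hM hab hn han]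

end Cw

lemma InBStar.mul {a : A} {ω ω' : FreeMonoid A} (h : InBStar a ω) (h' : InBStar a ω') (R : ℕ) :
    InBStar a (ω * apow a R * ω') := by
  obtain ⟨c, l, hc, hl, rfl⟩ := h
  obtain ⟨c', l', hc', hl', rfl⟩ := h'
  refine ⟨c, l ++ (R, c') :: l', hc, ?_, ?_⟩
  · intro p hp
    rcases List.mem_append.1 hp with hp | hp
    · exact hl p hp
    · rcases List.mem_cons.1 hp with rfl | hp
      · exact hc'
      · exact hl' p hp
  · simp only [List.map_append, List.map_cons, List.prod_append, List.prod_cons, mul_assoc]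

theorem statement2 (a b : A) (hab : a ≠ b) (n : ℕ) (hn : 1 ≤ n)
    (M : Set (FreeMonoid A)) (hMfin : M.Finite) (hM : IsMaximalCode M)
    (han : apow a n ∈ M) :
    StableSet a b n { C | ∃ ω : FreeMonoid A, C = Cword a b n M ω } ∧
    StableSet a b n { C | ∃ ω : FreeMonoid A, InBStar a ω ∧ C = Cword a b n M ω } := by
  refine ⟨⟨?_, ?_⟩, ⟨?_, ?_⟩⟩
  · rintro _ ⟨ω, rfl⟩
    exact cbc_Cword hMfin hM hab hn han ω
  · rintro _ ⟨ω, rfl⟩ _ ⟨ω', rfl⟩ r hr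
    obtain ⟨R, hR⟩ := comp_eq hMfin hab hn han ω ω' hr
    exact ⟨_, hR⟩
  · rintro _ ⟨ω, _, rfl⟩
    exact cbc_Cword hMfin hM hab hn han ω
  · rintro _ ⟨ω, h, rfl⟩ _ ⟨ω', h', rfl⟩ r hr
    obtain ⟨R, hR⟩ := comp_eq hMfin hab hn han ω ω' hr
    exact ⟨_, h.mul h' R, hR⟩

end CBC
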